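/- Core pointwise Fourier-side decay estimate for the linearized compressible Navier–Stokes–Coriolis system (main estimate in the proof of Lemma 3.2): there exist constants C > 0 and c > 0 depending only on μ such that for every β ≥ 1, every ε > 0, every Ω ∈ ℝ, and every ξ ∈ ℝ³ with ξ ≠ 0 and |ξ| ≤ 2β/ε, every solution (â, û) of the Fourier-transformed linearized system with forcing (f̂, ĝ) satisfies, for all t ≥ 0, |(â(t), û(t))| ≤ C e^{−cκt/β²} |(â(0), û(0))| + C ∫₀ᵗ e^{−cκ(t−τ)/β²} |(f̂(τ), ĝ(τ))| dτ, where κ = |ξ|⁴/(Ω²ε² + |ξ|²). -/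

import Mathlib

noncomputable section
open scoped BigOperators

/-- Hermitian inner product on `ℂ³`: `⟨v,w⟩ = ∑ₖ vₖ · conj(wₖ)`. -/
def hinner (v w : Fin 3 → ℂ) : ℂ := ∑ k, v k * (starRingEnd ℂ) (w k)

/-- Squared norm `‖w‖² = ∑ₖ |wₖ|²` on `ℂ³`. -/
def vnormSq (w : Fin 3 → ℂ) : ℝ := ∑ k, ‖w k‖ ^ 2

/-- Norm `‖w‖` on `ℂ³`. -/
def vnorm (w : Fin 3 → ℂ) : ℝ := Real.sqrt (vnormSq w)

/-- `|(z,w)| = √(|z|² + ‖w‖²)` for `z ∈ ℂ`, `w ∈ ℂ³`. -/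
def pairNorm (z : ℂ) (w : Fin 3 → ℂ) : ℝ := Real.sqrt (‖z‖ ^ 2 + vnormSq w)

/-- Cross product with `e₃ = (0,0,1)`: `e₃ × w = (−w₂, w₁, 0)`. -/
def cross3 (w : Fin 3 → ℂ) : Fin 3 → ℂ := ![-(w 1), w 0, 0]

/-- `|ξ|² = ∑ₖ ξₖ²` for `ξ ∈ ℝ³`. -/
def xiNormSq (ξ : Fin 3 → ℝ) : ℝ := ∑ k, (ξ k) ^ 2

/-- Euclidean norm `|ξ|` for `ξ ∈ ℝ³`. -/
def xiNorm (ξ : Fin 3 → ℝ) : ℝ := Real.sqrt (xiNormSq ξ)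

/-- `ξ·w = ∑ₖ ξₖ wₖ` for `ξ ∈ ℝ³` regarded in `ℂ³` and `w ∈ ℂ³`. -/
def xiDot (ξ : Fin 3 → ℝ) (w : Fin 3 → ℂ) : ℂ := ∑ k, (ξ k : ℂ) * w k

/-- The Fourier-transformed linearized compressible Navier–Stokes–Coriolis system
at time `t` with data `(â, û)`, derivatives `(â', û')` and forcing `(f̂, ĝ)`:
`â′ + (i/ε)(ξ·û) = f̂` and
`û′ + μ|ξ|²û + (μ+μ′)(ξ·û)ξ + Ω(e₃ × û) + (i/ε)âξ = ĝ`. -/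
def SystemAt (μ μ' ε Ω : ℝ) (ξ : Fin 3 → ℝ)
    (a a' : ℝ → ℂ) (u u' : ℝ → Fin 3 → ℂ)
    (f : ℝ → ℂ) (g : ℝ → Fin 3 → ℂ) (t : ℝ) : Prop :=
  (a' t + (Complex.I / (ε : ℂ)) * xiDot ξ (u t) = f t) ∧
  (∀ k, u' t k + ((μ * xiNormSq ξ : ℝ) : ℂ) * u t k
      + (((μ + μ') : ℝ) : ℂ) * xiDot ξ (u t) * (ξ k : ℂ)
      + ((Ω : ℝ) : ℂ) * cross3 (u t) k
      + (Complex.I / (ε : ℂ)) * a t * (ξ k : ℂ) = g t k)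

/-- `κ(|ξ|, Ωε) = |ξ|⁴/(Ω²ε² + |ξ|²)`. -/
def kappa (Ω ε : ℝ) (ξ : Fin 3 → ℝ) : ℝ :=
  xiNorm ξ ^ 4 / (Ω ^ 2 * ε ^ 2 + xiNorm ξ ^ 2)

/-!
The energy balance dissipates `u` at the rate `|ξ|²` but does not see `a`, and the Coriolis force,
being skew, drops out of it. Adding the corrector `δ Im (ā ⟪ξ, u⟫)` to the energy produces the
damping `-(δ / ε) |ξ|² |a|²`, at the cost of the acoustic term `(δ / ε) |⟪ξ, u⟫|²` and of cross
terms of size `δ |ξ|³ |a| |u|` and `δ |Ω| |ξ| |a| |u|`. With `δ` a small multiple of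
`ε κ / (β² |ξ|²)`, the condition `|ξ| ≤ 2β / ε` lets the viscosity and half of the new damping
absorb all of them, the factor `Ω² ε² + |ξ|²` in the denominator of `κ` being exactly what the
Coriolis cross term requires. The modified energy then decays at a rate proportional to `κ / β²`,
and Grönwall's inequality for its square root gives the estimate.
-/

open Set MeasureTheory Filter Topology
open scoped InnerProductSpace ComplexConjugate

section Gronwall

variable {a b : ℝ} {E E' φ : ℝ → ℝ}

lemma sqrt_le_sqrt_add_integral_of_deriv_le (hab : a ≤ b) (hE : ContinuousOn E (Icc a b))
    (hE' : ∀ s ∈ Ioo a b, HasDerivWithinAt E (E' s) (Ioi s) s) (hE₀ : ∀ s ∈ Icc a b, 0 ≤ E s)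
    (hφ : IntegrableOn φ (Icc a b)) (hφ₀ : ∀ s ∈ Ioo a b, 0 ≤ φ s)
    (hle : ∀ s ∈ Ioo a b, E' s ≤ 2 * φ s * √(E s)) :
    √(E b) ≤ √(E a) + ∫ s in a..b, φ s := by
  -- The square root is not differentiable where `E` vanishes, so `E + η` is used and `η → 0`.
  have regularized : ∀ η > 0, √(E b + η) ≤ √(E a + η) + ∫ s in a..b, φ s := by
    intro η hη
    have pos : ∀ s ∈ Icc a b, 0 < E s + η := fun s hs ↦ add_pos_of_nonneg_of_pos (hE₀ s hs) hη
    have deriv_le : ∀ s ∈ Ioo a b, E' s / (2 * √(E s + η)) ≤ φ s := by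
      intro s hs
      rw [div_le_iff₀ (mul_pos two_pos (Real.sqrt_pos.2 (pos s (Ioo_subset_Icc_self hs))))]
      calc E' s ≤ 2 * φ s * √(E s) := hle s hs
        _ ≤ 2 * φ s * √(E s + η) := by
          have := hφ₀ s hs
          gcongr
          linarith
        _ = φ s * (2 * √(E s + η)) := by ring
    have := intervalIntegral.sub_le_integral_of_hasDeriv_right_of_le hab
      (g := fun s ↦ √(E s + η)) (hE.add continuousOn_const).sqrt
      (fun s hs ↦ ((hE' s hs).add_const η).sqrt (pos s (Ioo_subset_Icc_self hs)).ne') hφ deriv_le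
    linarith
  have tendsto_sqrt : ∀ x, Tendsto (fun η ↦ √(x + η)) (𝓝[>] 0) (𝓝 √x) := fun x ↦
    (Continuous.tendsto' (by fun_prop) 0 _ (by simp)).mono_left nhdsWithin_le_nhds
  exact le_of_tendsto_of_tendsto (tendsto_sqrt _) ((tendsto_sqrt _).add_const _)
    (eventually_mem_nhdsWithin.mono regularized)

lemma sqrt_le_exp_mul_sqrt_add_integral_of_deriv_le {k : ℝ} (hab : a ≤ b)
    (hE : ContinuousOn E (Icc a b)) (hE' : ∀ s ∈ Ioo a b, HasDerivWithinAt E (E' s) (Ioi s) s)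
    (hE₀ : ∀ s ∈ Icc a b, 0 ≤ E s) (hφ : IntegrableOn φ (Icc a b))
    (hφ₀ : ∀ s ∈ Ioo a b, 0 ≤ φ s)
    (hle : ∀ s ∈ Ioo a b, E' s ≤ -(2 * k) * E s + 2 * φ s * √(E s)) :
    √(E b) ≤ Real.exp (-k * (b - a)) * √(E a)
      + ∫ s in a..b, Real.exp (-k * (b - s)) * φ s := by
  have sqrt_weighted : ∀ s, √(Real.exp (-k * (b - s)) ^ 2 * E s)
      = Real.exp (-k * (b - s)) * √(E s) := fun s ↦ by
    rw [Real.sqrt_mul (sq_nonneg _), Real.sqrt_sq (Real.exp_pos _).le]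
  have hasDeriv_weight : ∀ s, HasDerivAt (fun s ↦ Real.exp (-k * (b - s)) ^ 2)
      (2 * k * Real.exp (-k * (b - s)) ^ 2) s := fun s ↦
    ((((hasDerivAt_id s).const_sub b).const_mul (-k)).exp.pow 2).congr_deriv (by
      simp only [id_eq, Nat.cast_ofNat, Nat.add_one_sub_one, pow_one]
      ring)
  have weighted := sqrt_le_sqrt_add_integral_of_deriv_le hab
    (E := fun s ↦ Real.exp (-k * (b - s)) ^ 2 * E s) (φ := fun s ↦ Real.exp (-k * (b - s)) * φ s)
    (ContinuousOn.mul (by fun_prop) hE)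
    (fun s hs ↦ (hasDeriv_weight s).hasDerivWithinAt.mul (hE' s hs))
    (fun s hs ↦ mul_nonneg (sq_nonneg _) (hE₀ s hs))
    (hφ.continuousOn_mul (by fun_prop) isCompact_Icc)
    (fun s hs ↦ mul_nonneg (Real.exp_pos _).le (hφ₀ s hs)) fun s hs ↦ by
      rw [sqrt_weighted]
      calc 2 * k * Real.exp (-k * (b - s)) ^ 2 * E s + Real.exp (-k * (b - s)) ^ 2 * E' s
          = Real.exp (-k * (b - s)) ^ 2 * (E' s + 2 * k * E s) := by ring
        _ ≤ Real.exp (-k * (b - s)) ^ 2 * (2 * φ s * √(E s)) := by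
          gcongr
          linarith [hle s hs]
        _ = 2 * (Real.exp (-k * (b - s)) * φ s) * (Real.exp (-k * (b - s)) * √(E s)) := by ring
  simpa only [sqrt_weighted, sub_self, mul_zero, Real.exp_zero, one_pow, one_mul] using weighted

end Gronwall

lemma mul_le_sq_div_add_mul_sq {ε : ℝ} (hε : 0 < ε) (x y : ℝ) :
    x * y ≤ x ^ 2 / (4 * ε) + ε * y ^ 2 := by
  rw [div_add' _ _ _ (by positivity), le_div_iff₀ (by positivity)]
  linarith [sq_nonneg (x - 2 * ε * y)]

lemma mul_add_mul_le_sqrt_mul_sqrt (x y z w : ℝ) :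
    x * z + y * w ≤ √(x ^ 2 + y ^ 2) * √(z ^ 2 + w ^ 2) := by
  simpa using Real.sum_mul_le_sqrt_mul_sqrt Finset.univ ![x, y] ![z, w]

section CorrectorWeight

/-- Smallness conditions on the weight `δ` of the corrector in `modifiedEnergy`, at a frequency of
modulus `r`. They bound, with a small constant `c`, every term that the corrector adds to the energy
balance and that has to be absorbed by the viscosity. -/
structure IsCorrectorWeight (c ε Ω r δ : ℝ) : Prop where
  nonneg : 0 ≤ δ
  le_mul : δ ≤ c * ε
  mul_sq_le : δ * ε * r ^ 2 ≤ 4 * c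
  mul_coriolis_sq_le : δ * ε * Ω ^ 2 ≤ c * r ^ 2

variable {c ε Ω r δ β : ℝ}

lemma IsCorrectorWeight.mul_le (h : IsCorrectorWeight c ε Ω r δ) (hc : 0 ≤ c) :
    δ * r ≤ 2 * c := by
  refine le_of_sq_le_sq ?_ (by positivity)
  calc (δ * r) ^ 2 = δ * (δ * r ^ 2) := by ring
    _ ≤ c * ε * (δ * r ^ 2) := by
      have := h.nonneg
      gcongr
      exact h.le_mul
    _ = c * (δ * ε * r ^ 2) := by ring
    _ ≤ c * (4 * c) := mul_le_mul_of_nonneg_left h.mul_sq_le hc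
    _ = (2 * c) ^ 2 := by ring

/-- The corrector weight `c ε κ / (β² r²)`, where `κ = r⁴ / (Ω² ε² + r²)`. -/
def correctorWeight (c ε Ω β r : ℝ) : ℝ :=
  c * ε * r ^ 2 / (β ^ 2 * (Ω ^ 2 * ε ^ 2 + r ^ 2))

lemma isCorrectorWeight_correctorWeight (hc : 0 ≤ c) (hε : 0 < ε) (hβ : 1 ≤ β) (hr : 0 < r)
    (hrβ : r ≤ 2 * β / ε) : IsCorrectorWeight c ε Ω r (correctorWeight c ε Ω β r) := by
  have hβ₂ : 1 ≤ β ^ 2 := one_le_pow₀ hβ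
  have hΩ : 0 ≤ Ω ^ 2 * ε ^ 2 := by positivity
  have denom_pos : 0 < β ^ 2 * (Ω ^ 2 * ε ^ 2 + r ^ 2) := by positivity
  have le_denom : Ω ^ 2 * ε ^ 2 + r ^ 2 ≤ β ^ 2 * (Ω ^ 2 * ε ^ 2 + r ^ 2) :=
    le_mul_of_one_le_left (by positivity) hβ₂
  have hεr : ε ^ 2 * r ^ 2 ≤ 4 * β ^ 2 := by
    calc ε ^ 2 * r ^ 2 = (r * ε) ^ 2 := by ring
      _ ≤ (2 * β) ^ 2 := pow_le_pow_left₀ (by positivity) ((le_div_iff₀ hε).1 hrβ) 2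
      _ = 4 * β ^ 2 := by ring
  refine ⟨by unfold correctorWeight; positivity, ?_, ?_, ?_⟩
  · rw [correctorWeight, div_le_iff₀ denom_pos]
    gcongr
    linarith
  · rw [correctorWeight, div_mul_eq_mul_div, div_mul_eq_mul_div, div_le_iff₀ denom_pos]
    calc c * ε * r ^ 2 * ε * r ^ 2 = c * (ε ^ 2 * r ^ 2) * r ^ 2 := by ring
      _ ≤ c * (4 * β ^ 2) * (Ω ^ 2 * ε ^ 2 + r ^ 2) := by
        gcongr
        linarith
      _ = 4 * c * (β ^ 2 * (Ω ^ 2 * ε ^ 2 + r ^ 2)) := by ring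
  · rw [correctorWeight, div_mul_eq_mul_div, div_mul_eq_mul_div, div_le_iff₀ denom_pos]
    calc c * ε * r ^ 2 * ε * Ω ^ 2 = c * r ^ 2 * (Ω ^ 2 * ε ^ 2) := by ring
      _ ≤ c * r ^ 2 * (β ^ 2 * (Ω ^ 2 * ε ^ 2 + r ^ 2)) :=
        mul_le_mul_of_nonneg_left (by linarith [sq_nonneg r]) (by positivity)

lemma correctorWeight_mul_sq_div (hε : ε ≠ 0) :
    correctorWeight (4 * c) ε Ω β r * r ^ 2 / (4 * ε)
      = c * (r ^ 4 / (Ω ^ 2 * ε ^ 2 + r ^ 2)) / β ^ 2 := by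
  rw [correctorWeight]
  field_simp

end CorrectorWeight

section DecayConst

/-- The constant `c` in the decay rate `c κ / β²`, for shear viscosity `μ` and total viscosity `ν`.
It is a quarter of the constant `b` used in `correctorWeight`, for which `4 (1 + ν²) b = min μ ν` is
what makes the viscosity absorb all corrector terms. -/
def decayConst (μ ν : ℝ) : ℝ := min μ ν / (16 * (1 + ν ^ 2))

variable {μ ν : ℝ}

lemma decayConst_pos (hμ : 0 < μ) (hν : 0 < ν) : 0 < decayConst μ ν := by
  unfold decayConst
  positivity

lemma mul_decayConst (μ ν : ℝ) : 4 * (1 + ν ^ 2) * (4 * decayConst μ ν) = min μ ν := by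
  rw [decayConst]
  field_simp
  ring

lemma four_mul_decayConst_le (μ ν : ℝ) : 4 * decayConst μ ν ≤ 1 / 4 := by
  refine le_of_mul_le_mul_left ?_ (by positivity : 0 < 4 * (1 + ν ^ 2))
  linarith [mul_decayConst μ ν, min_le_right μ ν, sq_nonneg (ν - 1), sq_nonneg ν]

end DecayConst

variable {H : Type*} [NormedAddCommGroup H] [InnerProductSpace ℂ H]

/-- The linearized compressible Navier–Stokes–Coriolis system at the frequency `ξ` and at a fixed
time, with velocities in a complex inner product space: `a'`, `u'` are the time derivatives, `Ω • J`
is the Coriolis operator, `μ` the shear viscosity and `ν = 2μ + μ'` the total viscosity. -/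
structure LinearizedSystem (μ ν ε Ω : ℝ) (J : H → H) (ξ : H) (a a' f : ℂ) (u u' g : H) :
    Prop where
  mass : a' + Complex.I / ε * ⟪ξ, u⟫_ℂ = f
  momentum : u' + ((μ * ‖ξ‖ ^ 2 : ℝ) : ℂ) • u + (((ν - μ : ℝ) : ℂ) * ⟪ξ, u⟫_ℂ) • ξ
    + (Ω : ℂ) • J u + (Complex.I / ε * a) • ξ = g

/-- The energy `(|a|² + ‖u‖²) / 2` with the corrector `δ Im (ā ⟪ξ, u⟫)`, whose time derivative
contains the damping of `a` that the energy balance itself lacks. -/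
def modifiedEnergy (δ : ℝ) (ξ : H) (a : ℂ) (u : H) : ℝ :=
  (‖a‖ ^ 2 + ‖u‖ ^ 2) / 2 + δ * (conj a * ⟪ξ, u⟫_ℂ).im

/-- The time derivative of `modifiedEnergy` along a curve through `(a, u)` with velocity
`(a', u')`. -/
def modifiedEnergyRate (δ : ℝ) (ξ : H) (a a' : ℂ) (u u' : H) : ℝ :=
  (conj a * a').re + (⟪u, u'⟫_ℂ).re + δ * (conj a' * ⟪ξ, u⟫_ℂ + conj a * ⟪ξ, u'⟫_ℂ).im

lemma hasDerivWithinAt_norm_sq_complex {u : ℝ → H} {u' : H} {s : Set ℝ} {t : ℝ}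
    (hu : HasDerivWithinAt u u' s t) :
    HasDerivWithinAt (fun t ↦ ‖u t‖ ^ 2) (2 * (⟪u t, u'⟫_ℂ).re) s t := by
  let := InnerProductSpace.complexToReal (G := H)
  exact hu.norm_sq

variable {μ ν ε Ω c δ : ℝ} {J : H → H} {ξ : H}

lemma hasDerivWithinAt_modifiedEnergy {a : ℝ → ℂ} {u : ℝ → H} {a' : ℂ} {u' : H} {s : Set ℝ} {t : ℝ}
    (δ : ℝ) (ξ : H) (ha : HasDerivWithinAt a a' s t) (hu : HasDerivWithinAt u u' s t) :
    HasDerivWithinAt (fun t ↦ modifiedEnergy δ ξ (a t) (u t))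
      (modifiedEnergyRate δ ξ (a t) a' (u t) u') s t := by
  have inner_deriv : HasDerivWithinAt (fun t ↦ ⟪ξ, u t⟫_ℂ) ⟪ξ, u'⟫_ℂ s t := by
    simpa using (hasDerivWithinAt_const t s ξ).inner ℂ hu
  have corrector_deriv := Complex.imCLM.hasFDerivAt.comp_hasDerivWithinAt t
    (ha.star.mul inner_deriv)
  refine ((((hasDerivWithinAt_norm_sq_complex ha).add
    (hasDerivWithinAt_norm_sq_complex hu)).div_const 2).add
    (corrector_deriv.const_mul δ)).congr_deriv ?_
  simp only [modifiedEnergyRate, RCLike.inner_apply, RCLike.star_def, Complex.imCLM_apply,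
    Complex.mul_re, Complex.mul_im, Complex.add_im, Complex.conj_re, Complex.conj_im]
  ring

lemma modifiedEnergyRate_eq {a a' f : ℂ} {u u' g : H}
    (h : LinearizedSystem μ ν ε Ω J ξ a a' f u u' g) (hJ : (⟪u, J u⟫_ℂ).re = 0) (δ : ℝ) :
    modifiedEnergyRate δ ξ a a' u u' =
      -(μ * (‖ξ‖ * ‖u‖) ^ 2 + (ν - μ) * ‖⟪ξ, u⟫_ℂ‖ ^ 2)
      - δ / ε * (‖ξ‖ * ‖a‖) ^ 2 + δ / ε * ‖⟪ξ, u⟫_ℂ‖ ^ 2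
      - δ * (ν * ‖ξ‖ ^ 2 * (conj a * ⟪ξ, u⟫_ℂ).im + Ω * (conj a * ⟪ξ, J u⟫_ℂ).im)
      + ((conj a * f).re + (⟪u, g⟫_ℂ).re + δ * (conj f * ⟪ξ, u⟫_ℂ + conj a * ⟪ξ, g⟫_ℂ).im) := by
  obtain ⟨rfl, rfl⟩ := h
  simp only [modifiedEnergyRate, inner_add_right, inner_smul_right, inner_self_eq_norm_sq_to_K,
    ← inner_conj_symm u ξ, mul_pow, Complex.sq_norm, Complex.normSq_apply]
  simp only [Complex.coe_algebraMap, ← Complex.ofReal_pow, map_add, map_mul, map_div₀,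
    Complex.conj_I, Complex.conj_ofReal, Complex.add_re, Complex.add_im, Complex.neg_re,
    Complex.neg_im, Complex.mul_re, Complex.mul_im, Complex.conj_re, Complex.conj_im,
    Complex.div_ofReal_re, Complex.div_ofReal_im, Complex.I_re, Complex.I_im, Complex.ofReal_re,
    Complex.ofReal_im]
  linear_combination -Ω * hJ

lemma abs_im_conj_mul_inner_le (z : ℂ) (ξ v : H) :
    |(conj z * ⟪ξ, v⟫_ℂ).im| ≤ ‖z‖ * (‖ξ‖ * ‖v‖) :=
  calc |(conj z * ⟪ξ, v⟫_ℂ).im| ≤ ‖conj z * ⟪ξ, v⟫_ℂ‖ := Complex.abs_im_le_norm _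
    _ = ‖z‖ * ‖⟪ξ, v⟫_ℂ‖ := by rw [norm_mul, RCLike.norm_conj]
    _ ≤ ‖z‖ * (‖ξ‖ * ‖v‖) := by
      gcongr
      exact norm_inner_le_norm ξ v

lemma abs_modifiedEnergy_sub_le (hδ : 0 ≤ δ) (hδξ : δ * ‖ξ‖ ≤ 1 / 2) (a : ℂ) (u : H) :
    |modifiedEnergy δ ξ a u - (‖a‖ ^ 2 + ‖u‖ ^ 2) / 2| ≤ (‖a‖ ^ 2 + ‖u‖ ^ 2) / 4 :=
  calc |modifiedEnergy δ ξ a u - (‖a‖ ^ 2 + ‖u‖ ^ 2) / 2| = δ * |(conj a * ⟪ξ, u⟫_ℂ).im| := by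
        rw [modifiedEnergy, add_sub_cancel_left, abs_mul, abs_of_nonneg hδ]
    _ ≤ δ * (‖a‖ * (‖ξ‖ * ‖u‖)) := by
      gcongr
      exact abs_im_conj_mul_inner_le a ξ u
    _ = δ * ‖ξ‖ * (‖a‖ * ‖u‖) := by ring
    _ ≤ 1 / 2 * (‖a‖ * ‖u‖) := by gcongr
    _ ≤ (‖a‖ ^ 2 + ‖u‖ ^ 2) / 4 := by linarith [two_mul_le_add_sq ‖a‖ ‖u‖]

lemma modifiedEnergy_nonneg (hδ : 0 ≤ δ) (hδξ : δ * ‖ξ‖ ≤ 1 / 2) (a : ℂ) (u : H) :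
    0 ≤ modifiedEnergy δ ξ a u := by
  have := (abs_le.1 (abs_modifiedEnergy_sub_le hδ hδξ a u)).1
  linarith [sq_nonneg ‖a‖, sq_nonneg ‖u‖]

lemma modifiedEnergy_le_norm_sq_add_norm_sq (hδ : 0 ≤ δ) (hδξ : δ * ‖ξ‖ ≤ 1 / 2) (a : ℂ) (u : H) :
    modifiedEnergy δ ξ a u ≤ ‖a‖ ^ 2 + ‖u‖ ^ 2 := by
  have := (abs_le.1 (abs_modifiedEnergy_sub_le hδ hδξ a u)).2
  linarith [sq_nonneg ‖a‖, sq_nonneg ‖u‖]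

lemma sqrt_norm_sq_add_norm_sq_le (hδ : 0 ≤ δ) (hδξ : δ * ‖ξ‖ ≤ 1 / 2) (a : ℂ) (u : H) :
    √(‖a‖ ^ 2 + ‖u‖ ^ 2) ≤ 2 * √(modifiedEnergy δ ξ a u) := by
  have := (abs_le.1 (abs_modifiedEnergy_sub_le hδ hδξ a u)).1
  calc √(‖a‖ ^ 2 + ‖u‖ ^ 2) ≤ √(2 ^ 2 * modifiedEnergy δ ξ a u) :=
        Real.sqrt_le_sqrt (by linarith)
    _ = 2 * √(modifiedEnergy δ ξ a u) := by
      rw [Real.sqrt_mul (by positivity), Real.sqrt_sq two_pos.le]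

lemma min_mul_sq_le_viscous_dissipation (μ ν : ℝ) (ξ u : H) :
    min μ ν * (‖ξ‖ * ‖u‖) ^ 2 ≤ μ * (‖ξ‖ * ‖u‖) ^ 2 + (ν - μ) * ‖⟪ξ, u⟫_ℂ‖ ^ 2 := by
  have cauchy : ‖⟪ξ, u⟫_ℂ‖ ^ 2 ≤ (‖ξ‖ * ‖u‖) ^ 2 := by
    gcongr
    exact norm_inner_le_norm ξ u
  have transversal := mul_le_mul_of_nonneg_right (min_le_left μ ν) (sub_nonneg.2 cauchy)
  have longitudinal := mul_le_mul_of_nonneg_right (min_le_right μ ν) (sq_nonneg ‖⟪ξ, u⟫_ℂ‖)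
  linarith

lemma forcing_le (hδ : 0 ≤ δ) (hδξ : δ * ‖ξ‖ ≤ 1) (a f : ℂ) (u g : H) :
    (conj a * f).re + (⟪u, g⟫_ℂ).re + δ * (conj f * ⟪ξ, u⟫_ℂ + conj a * ⟪ξ, g⟫_ℂ).im
      ≤ 2 * (√(‖a‖ ^ 2 + ‖u‖ ^ 2) * √(‖f‖ ^ 2 + ‖g‖ ^ 2)) := by
  have mass_power : (conj a * f).re ≤ ‖a‖ * ‖f‖ :=
    (Complex.re_le_norm _).trans_eq (by rw [norm_mul, RCLike.norm_conj])
  have momentum_power : (⟪u, g⟫_ℂ).re ≤ ‖u‖ * ‖g‖ := re_inner_le_norm (𝕜 := ℂ) u g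
  have corrector_power : δ * (conj f * ⟪ξ, u⟫_ℂ + conj a * ⟪ξ, g⟫_ℂ).im
      ≤ ‖a‖ * ‖g‖ + ‖u‖ * ‖f‖ :=
    calc δ * (conj f * ⟪ξ, u⟫_ℂ + conj a * ⟪ξ, g⟫_ℂ).im
        ≤ δ * (‖f‖ * (‖ξ‖ * ‖u‖) + ‖a‖ * (‖ξ‖ * ‖g‖)) := by
          rw [Complex.add_im]
          gcongr
          · exact (le_abs_self _).trans (abs_im_conj_mul_inner_le f ξ u)
          · exact (le_abs_self _).trans (abs_im_conj_mul_inner_le a ξ g)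
      _ = δ * ‖ξ‖ * (‖a‖ * ‖g‖ + ‖u‖ * ‖f‖) := by ring
      _ ≤ ‖a‖ * ‖g‖ + ‖u‖ * ‖f‖ := mul_le_of_le_one_left (by positivity) hδξ
  have swapped := mul_add_mul_le_sqrt_mul_sqrt ‖a‖ ‖u‖ ‖g‖ ‖f‖
  rw [add_comm (‖g‖ ^ 2)] at swapped
  linarith [mul_add_mul_le_sqrt_mul_sqrt ‖a‖ ‖u‖ ‖f‖ ‖g‖]

lemma corrector_error_le (hε : 0 < ε) (hδ : IsCorrectorWeight c ε Ω ‖ξ‖ δ) {u v : H}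
    (hv : ‖v‖ ≤ ‖u‖) (ν : ℝ) (a : ℂ) :
    -(δ * (ν * ‖ξ‖ ^ 2 * (conj a * ⟪ξ, u⟫_ℂ).im + Ω * (conj a * ⟪ξ, v⟫_ℂ).im))
      ≤ δ / (2 * ε) * (‖ξ‖ * ‖a‖) ^ 2 + (4 * ν ^ 2 + 1) * c * (‖ξ‖ * ‖u‖) ^ 2 := by
  have viscous : -(ν * ‖ξ‖ ^ 2 * (conj a * ⟪ξ, u⟫_ℂ).im)
      ≤ (‖ξ‖ * ‖a‖) ^ 2 / (4 * ε) + ε * (|ν| * ‖ξ‖ ^ 2 * ‖u‖) ^ 2 :=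
    calc -(ν * ‖ξ‖ ^ 2 * (conj a * ⟪ξ, u⟫_ℂ).im)
        ≤ |ν| * ‖ξ‖ ^ 2 * |(conj a * ⟪ξ, u⟫_ℂ).im| := by
          refine (neg_le_abs _).trans_eq ?_
          rw [abs_mul, abs_mul, abs_of_nonneg (sq_nonneg ‖ξ‖)]
      _ ≤ |ν| * ‖ξ‖ ^ 2 * (‖a‖ * (‖ξ‖ * ‖u‖)) := by
          gcongr
          exact abs_im_conj_mul_inner_le a ξ u
      _ = ‖ξ‖ * ‖a‖ * (|ν| * ‖ξ‖ ^ 2 * ‖u‖) := by ring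
      _ ≤ _ := mul_le_sq_div_add_mul_sq hε _ _
  have coriolis : -(Ω * (conj a * ⟪ξ, v⟫_ℂ).im)
      ≤ (‖ξ‖ * ‖a‖) ^ 2 / (4 * ε) + ε * (|Ω| * ‖u‖) ^ 2 :=
    calc -(Ω * (conj a * ⟪ξ, v⟫_ℂ).im) ≤ |Ω| * |(conj a * ⟪ξ, v⟫_ℂ).im| :=
          (neg_le_abs _).trans_eq (abs_mul _ _)
      _ ≤ |Ω| * (‖a‖ * (‖ξ‖ * ‖u‖)) := by
          gcongr
          exact (abs_im_conj_mul_inner_le a ξ v).trans (by gcongr)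
      _ = ‖ξ‖ * ‖a‖ * (|Ω| * ‖u‖) := by ring
      _ ≤ _ := mul_le_sq_div_add_mul_sq hε _ _
  calc -(δ * (ν * ‖ξ‖ ^ 2 * (conj a * ⟪ξ, u⟫_ℂ).im + Ω * (conj a * ⟪ξ, v⟫_ℂ).im))
      = δ * (-(ν * ‖ξ‖ ^ 2 * (conj a * ⟪ξ, u⟫_ℂ).im) + -(Ω * (conj a * ⟪ξ, v⟫_ℂ).im)) := by ring
    _ ≤ δ * ((‖ξ‖ * ‖a‖) ^ 2 / (4 * ε) + ε * (|ν| * ‖ξ‖ ^ 2 * ‖u‖) ^ 2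
        + ((‖ξ‖ * ‖a‖) ^ 2 / (4 * ε) + ε * (|Ω| * ‖u‖) ^ 2)) :=
      mul_le_mul_of_nonneg_left (add_le_add viscous coriolis) hδ.nonneg
    _ = δ / (2 * ε) * (‖ξ‖ * ‖a‖) ^ 2 + ν ^ 2 * (δ * ε * ‖ξ‖ ^ 2) * (‖ξ‖ * ‖u‖) ^ 2
        + δ * ε * Ω ^ 2 * ‖u‖ ^ 2 := by
      simp only [mul_pow, sq_abs]
      ring
    _ ≤ δ / (2 * ε) * (‖ξ‖ * ‖a‖) ^ 2 + ν ^ 2 * (4 * c) * (‖ξ‖ * ‖u‖) ^ 2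
        + c * ‖ξ‖ ^ 2 * ‖u‖ ^ 2 := by
      gcongr _ + ν ^ 2 * ?_ * _ + ?_ * _
      exacts [hδ.mul_sq_le, hδ.mul_coriolis_sq_le]
    _ = δ / (2 * ε) * (‖ξ‖ * ‖a‖) ^ 2 + (4 * ν ^ 2 + 1) * c * (‖ξ‖ * ‖u‖) ^ 2 := by ring

lemma modifiedEnergyRate_le (hε : 0 < ε) (hc : 0 ≤ c) (hc' : 4 * (1 + ν ^ 2) * c ≤ min μ ν)
    (hδ : IsCorrectorWeight c ε Ω ‖ξ‖ δ) (hδξ : δ * ‖ξ‖ ≤ 1 / 2) {a a' f : ℂ} {u u' g : H}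
    (h : LinearizedSystem μ ν ε Ω J ξ a a' f u u' g) (hJ : (⟪u, J u⟫_ℂ).re = 0)
    (hJ' : ‖J u‖ ≤ ‖u‖) :
    modifiedEnergyRate δ ξ a a' u u' ≤ -(δ * ‖ξ‖ ^ 2 / (2 * ε)) * (‖a‖ ^ 2 + ‖u‖ ^ 2)
      + 2 * (√(‖a‖ ^ 2 + ‖u‖ ^ 2) * √(‖f‖ ^ 2 + ‖g‖ ^ 2)) := by
  have hδε : δ / ε ≤ c := (div_le_iff₀ hε).2 hδ.le_mul
  have acoustic : δ / ε * ‖⟪ξ, u⟫_ℂ‖ ^ 2 ≤ c * (‖ξ‖ * ‖u‖) ^ 2 := by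
    gcongr
    exact norm_inner_le_norm ξ u
  have velocity_decay : δ / (2 * ε) * (‖ξ‖ * ‖u‖) ^ 2 ≤ c / 2 * (‖ξ‖ * ‖u‖) ^ 2 := by
    rw [mul_comm 2 ε, ← div_div]
    gcongr
  have viscous := (mul_le_mul_of_nonneg_right hc' (sq_nonneg (‖ξ‖ * ‖u‖))).trans
    (min_mul_sq_le_viscous_dissipation μ ν ξ u)
  have corrector := corrector_error_le hε hδ hJ' ν a
  have forcing := forcing_le hδ.nonneg (hδξ.trans one_half_lt_one.le) a f u g
  have slack : 0 ≤ c * (‖ξ‖ * ‖u‖) ^ 2 := by positivity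
  have half : δ / ε * (‖ξ‖ * ‖a‖) ^ 2 = 2 * (δ / (2 * ε) * (‖ξ‖ * ‖a‖) ^ 2) := by
    field_simp
  have split : δ * ‖ξ‖ ^ 2 / (2 * ε) * (‖a‖ ^ 2 + ‖u‖ ^ 2)
      = δ / (2 * ε) * (‖ξ‖ * ‖a‖) ^ 2 + δ / (2 * ε) * (‖ξ‖ * ‖u‖) ^ 2 := by
    ring
  rw [modifiedEnergyRate_eq h hJ]
  linarith

lemma modifiedEnergyRate_le_neg_mul_modifiedEnergy (hε : 0 < ε) (hc : 0 ≤ c)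
    (hc' : 4 * (1 + ν ^ 2) * c ≤ min μ ν) (hδ : IsCorrectorWeight c ε Ω ‖ξ‖ δ)
    (hδξ : δ * ‖ξ‖ ≤ 1 / 2) {a a' f : ℂ} {u u' g : H}
    (h : LinearizedSystem μ ν ε Ω J ξ a a' f u u' g) (hJ : (⟪u, J u⟫_ℂ).re = 0)
    (hJ' : ‖J u‖ ≤ ‖u‖) :
    modifiedEnergyRate δ ξ a a' u u' ≤ -(2 * (δ * ‖ξ‖ ^ 2 / (4 * ε))) * modifiedEnergy δ ξ a u
      + 2 * (2 * √(‖f‖ ^ 2 + ‖g‖ ^ 2)) * √(modifiedEnergy δ ξ a u) := by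
  have rate_nonneg : 0 ≤ δ * ‖ξ‖ ^ 2 / (2 * ε) := by
    have := hδ.nonneg
    positivity
  calc modifiedEnergyRate δ ξ a a' u u'
      ≤ -(δ * ‖ξ‖ ^ 2 / (2 * ε)) * (‖a‖ ^ 2 + ‖u‖ ^ 2)
        + 2 * (√(‖a‖ ^ 2 + ‖u‖ ^ 2) * √(‖f‖ ^ 2 + ‖g‖ ^ 2)) :=
      modifiedEnergyRate_le hε hc hc' hδ hδξ h hJ hJ'
    _ ≤ -(δ * ‖ξ‖ ^ 2 / (2 * ε)) * modifiedEnergy δ ξ a u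
        + 2 * (2 * √(modifiedEnergy δ ξ a u) * √(‖f‖ ^ 2 + ‖g‖ ^ 2)) :=
      add_le_add
        (mul_le_mul_of_nonpos_left (modifiedEnergy_le_norm_sq_add_norm_sq hδ.nonneg hδξ a u)
          (neg_nonpos.2 rate_nonneg))
        (by gcongr; exact sqrt_norm_sq_add_norm_sq_le hδ.nonneg hδξ a u)
    _ = _ := by ring

section Evolution

variable {a a' f : ℝ → ℂ} {u u' g : ℝ → H} {t : ℝ}

lemma sqrt_modifiedEnergy_le_exp_mul_add_integral (hε : 0 < ε) (hc : 0 ≤ c)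
    (hc' : 4 * (1 + ν ^ 2) * c ≤ min μ ν) (hδ : IsCorrectorWeight c ε Ω ‖ξ‖ δ)
    (hδξ : δ * ‖ξ‖ ≤ 1 / 2) (hJ : ∀ v, (⟪v, J v⟫_ℂ).re = 0) (hJ' : ∀ v, ‖J v‖ ≤ ‖v‖)
    (ha : ∀ t, 0 ≤ t → HasDerivWithinAt a (a' t) (Ici 0) t)
    (hu : ∀ t, 0 ≤ t → HasDerivWithinAt u (u' t) (Ici 0) t)
    (hf : ContinuousOn f (Ici 0)) (hg : ContinuousOn g (Ici 0))
    (hsys : ∀ t, 0 ≤ t → LinearizedSystem μ ν ε Ω J ξ (a t) (a' t) (f t) (u t) (u' t) (g t))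
    (ht : 0 ≤ t) :
    √(modifiedEnergy δ ξ (a t) (u t)) ≤
      Real.exp (-(δ * ‖ξ‖ ^ 2 / (4 * ε)) * t) * √(modifiedEnergy δ ξ (a 0) (u 0))
        + 2 * ∫ τ in (0 : ℝ)..t,
          Real.exp (-(δ * ‖ξ‖ ^ 2 / (4 * ε)) * (t - τ)) * √(‖f τ‖ ^ 2 + ‖g τ‖ ^ 2) := by
  have energy_deriv := fun s (hs : 0 ≤ s) ↦
    hasDerivWithinAt_modifiedEnergy δ ξ (ha s hs) (hu s hs)
  have forcing_continuous : ContinuousOn (fun s ↦ 2 * √(‖f s‖ ^ 2 + ‖g s‖ ^ 2)) (Icc 0 t) :=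
    (((hf.norm.pow 2).add (hg.norm.pow 2)).sqrt.const_mul 2).mono Icc_subset_Ici_self
  have gronwall := sqrt_le_exp_mul_sqrt_add_integral_of_deriv_le ht
    (fun s hs ↦ (energy_deriv s hs.1).continuousWithinAt.mono Icc_subset_Ici_self)
    (fun s hs ↦ (energy_deriv s hs.1.le).mono (Ioi_subset_Ici hs.1.le))
    (fun s _ ↦ modifiedEnergy_nonneg hδ.nonneg hδξ (a s) (u s))
    forcing_continuous.integrableOn_Icc (fun _ _ ↦ by positivity)
    (fun s hs ↦ modifiedEnergyRate_le_neg_mul_modifiedEnergy hε hc hc' hδ hδξ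
      (hsys s hs.1.le) (hJ _) (hJ' _))
  simpa only [mul_left_comm _ (2 : ℝ), intervalIntegral.integral_const_mul, sub_zero]
    using gronwall

theorem fourier_pointwise_decay_general {β : ℝ} (hμ : 0 < μ) (hν : 0 < ν) (hε : 0 < ε)
    (hβ : 1 ≤ β) (hξ : ξ ≠ 0) (hξβ : ‖ξ‖ ≤ 2 * β / ε)
    (hJ : ∀ v, (⟪v, J v⟫_ℂ).re = 0) (hJ' : ∀ v, ‖J v‖ ≤ ‖v‖)
    (ha : ∀ t, 0 ≤ t → HasDerivWithinAt a (a' t) (Ici 0) t)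
    (hu : ∀ t, 0 ≤ t → HasDerivWithinAt u (u' t) (Ici 0) t)
    (hf : ContinuousOn f (Ici 0)) (hg : ContinuousOn g (Ici 0))
    (hsys : ∀ t, 0 ≤ t → LinearizedSystem μ ν ε Ω J ξ (a t) (a' t) (f t) (u t) (u' t) (g t))
    (ht : 0 ≤ t) :
    √(‖a t‖ ^ 2 + ‖u t‖ ^ 2) ≤
      4 * Real.exp (-(decayConst μ ν * (‖ξ‖ ^ 4 / (Ω ^ 2 * ε ^ 2 + ‖ξ‖ ^ 2)) / β ^ 2) * t)
          * √(‖a 0‖ ^ 2 + ‖u 0‖ ^ 2)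
        + 4 * ∫ τ in (0 : ℝ)..t,
          Real.exp (-(decayConst μ ν * (‖ξ‖ ^ 4 / (Ω ^ 2 * ε ^ 2 + ‖ξ‖ ^ 2)) / β ^ 2) * (t - τ))
            * √(‖f τ‖ ^ 2 + ‖g τ‖ ^ 2) := by
  have hc : 0 ≤ 4 * decayConst μ ν := mul_nonneg four_pos.le (decayConst_pos hμ hν).le
  have weight := isCorrectorWeight_correctorWeight (Ω := Ω) hc hε hβ (norm_pos_iff.2 hξ) hξβ
  rw [← correctorWeight_mul_sq_div hε.ne']
  set δ := correctorWeight (4 * decayConst μ ν) ε Ω β ‖ξ‖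
  have hδξ : δ * ‖ξ‖ ≤ 1 / 2 := by linarith [weight.mul_le hc, four_mul_decayConst_le μ ν]
  have energy_decay := sqrt_modifiedEnergy_le_exp_mul_add_integral hε hc
    (mul_decayConst μ ν).le weight hδξ hJ hJ' ha hu hf hg hsys ht
  have initial : √(modifiedEnergy δ ξ (a 0) (u 0)) ≤ 2 * √(‖a 0‖ ^ 2 + ‖u 0‖ ^ 2) :=
    (Real.sqrt_le_sqrt (modifiedEnergy_le_norm_sq_add_norm_sq weight.nonneg hδξ _ _)).trans
      (le_mul_of_one_le_left (Real.sqrt_nonneg _) one_le_two)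
  calc √(‖a t‖ ^ 2 + ‖u t‖ ^ 2) ≤ 2 * √(modifiedEnergy δ ξ (a t) (u t)) :=
        sqrt_norm_sq_add_norm_sq_le weight.nonneg hδξ _ _
    _ ≤ 2 * (_ * (2 * √(‖a 0‖ ^ 2 + ‖u 0‖ ^ 2)) + _) := by
      grw [energy_decay, initial]
    _ = _ := by ring

end Evolution

section Coordinates

lemma norm_toLp_sq (w : Fin 3 → ℂ) : ‖WithLp.toLp 2 w‖ ^ 2 = vnormSq w :=
  EuclideanSpace.norm_sq_eq _

/-- A real frequency as an element of the Hermitian space `ℂ³`. -/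
def complexFrequency (ξ : Fin 3 → ℝ) : EuclideanSpace ℂ (Fin 3) :=
  WithLp.toLp 2 fun k ↦ (ξ k : ℂ)

/-- The operator `e₃ ×` on the Hermitian space `ℂ³`. -/
def coriolis (v : EuclideanSpace ℂ (Fin 3)) : EuclideanSpace ℂ (Fin 3) :=
  WithLp.toLp 2 (cross3 v.ofLp)

lemma norm_complexFrequency (ξ : Fin 3 → ℝ) : ‖complexFrequency ξ‖ = xiNorm ξ := by
  simp [complexFrequency, EuclideanSpace.norm_eq, xiNorm, xiNormSq]

lemma inner_complexFrequency_toLp (ξ : Fin 3 → ℝ) (w : Fin 3 → ℂ) :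
    ⟪complexFrequency ξ, WithLp.toLp 2 w⟫_ℂ = xiDot ξ w := by
  simp [complexFrequency, PiLp.inner_apply, xiDot, mul_comm]

lemma complexFrequency_ne_zero {ξ : Fin 3 → ℝ} (hξ : ξ ≠ 0) : complexFrequency ξ ≠ 0 := by
  contrapose! hξ
  ext k
  simpa [complexFrequency] using congrArg (fun v ↦ v k) hξ

lemma re_inner_coriolis (v : EuclideanSpace ℂ (Fin 3)) : (⟪v, coriolis v⟫_ℂ).re = 0 := by
  simp only [coriolis, cross3, PiLp.inner_apply, RCLike.inner_apply, Fin.sum_univ_three,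
    Matrix.cons_val, zero_mul, add_zero, Complex.add_re, Complex.neg_re, Complex.neg_im,
    Complex.mul_re, Complex.conj_re, Complex.conj_im]
  ring

lemma norm_coriolis_le (v : EuclideanSpace ℂ (Fin 3)) : ‖coriolis v‖ ≤ ‖v‖ := by
  refine le_of_sq_le_sq ?_ (norm_nonneg v)
  simp only [coriolis, cross3, EuclideanSpace.norm_sq_eq, Fin.sum_univ_three, Matrix.cons_val,
    norm_neg, norm_zero]
  linarith [sq_nonneg ‖v 2‖]

lemma linearizedSystem_of_systemAt {μ μ' ε Ω t : ℝ} {ξ : Fin 3 → ℝ} {a a' f : ℝ → ℂ}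
    {u u' g : ℝ → Fin 3 → ℂ} (h : SystemAt μ μ' ε Ω ξ a a' u u' f g t) :
    LinearizedSystem μ (2 * μ + μ') ε Ω coriolis (complexFrequency ξ) (a t) (a' t) (f t)
      (WithLp.toLp 2 (u t)) (WithLp.toLp 2 (u' t)) (WithLp.toLp 2 (g t)) where
  mass := by rw [inner_complexFrequency_toLp, h.1]
  momentum := by
    have xiNormSq_nonneg : 0 ≤ xiNormSq ξ := Finset.sum_nonneg fun k _ ↦ sq_nonneg (ξ k)
    ext k
    rw [inner_complexFrequency_toLp, norm_complexFrequency, xiNorm, Real.sq_sqrt xiNormSq_nonneg,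
      show 2 * μ + μ' - μ = μ + μ' by ring]
    exact h.2 k

end Coordinates

/-- Core pointwise Fourier-side decay estimate for the linearized compressible
Navier–Stokes–Coriolis system (main estimate (ene-low) in the proof of Lemma 3.2):
there exist `C, c > 0` depending only on `μ` such that for every `β ≥ 1`, `ε > 0`,
`Ω ∈ ℝ`, `ξ ≠ 0` with `|ξ| ≤ 2β/ε`, every solution of the Fourier-transformed
linearized system satisfies
`|(â(t),û(t))| ≤ C e^{−cκt/β²}|(â(0),û(0))| + C ∫₀ᵗ e^{−cκ(t−τ)/β²}|(f̂(τ),ĝ(τ))| dτ`,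
where `κ = |ξ|⁴/(Ω²ε² + |ξ|²)`. -/
theorem fourier_pointwise_decay :
    ∀ μ : ℝ, 0 < μ →
    ∃ C : ℝ, 0 < C ∧ ∃ c : ℝ, 0 < c ∧
      ∀ (μ' ε Ω β : ℝ) (ξ : Fin 3 → ℝ)
        (a a' f : ℝ → ℂ) (u u' g : ℝ → Fin 3 → ℂ),
        2 * μ + μ' = 1 → 0 < ε → 1 ≤ β →
        ξ ≠ 0 → xiNorm ξ ≤ 2 * β / ε →
        (∀ t : ℝ, 0 ≤ t → HasDerivAt a (a' t) t) →
        (∀ t : ℝ, 0 ≤ t → HasDerivAt u (u' t) t) →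
        ContinuousOn f (Set.Ici 0) →
        ContinuousOn g (Set.Ici 0) →
        (∀ t : ℝ, 0 ≤ t → SystemAt μ μ' ε Ω ξ a a' u u' f g t) →
        ∀ t : ℝ, 0 ≤ t →
          pairNorm (a t) (u t)
            ≤ C * Real.exp (-(c * kappa Ω ε ξ / β ^ 2) * t) * pairNorm (a 0) (u 0)
              + C * ∫ τ in (0:ℝ)..t,
                  Real.exp (-(c * kappa Ω ε ξ / β ^ 2) * (t - τ)) * pairNorm (f τ) (g τ) := by
  intro μ hμ
  refine ⟨4, four_pos, decayConst μ 1, decayConst_pos hμ one_pos, ?_⟩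
  intro μ' ε Ω β ξ a a' f u u' g hμμ' hε hβ hξ hξβ ha hu hf hg hsys t ht
  simpa only [pairNorm, kappa, norm_toLp_sq, norm_complexFrequency, Function.comp_apply] using
    fourier_pointwise_decay_general hμ one_pos hε hβ (complexFrequency_ne_zero hξ)
      ((norm_complexFrequency ξ).trans_le hξβ) re_inner_coriolis norm_coriolis_le
      (fun s hs ↦ (ha s hs).hasDerivWithinAt)
      (fun s hs ↦
        ((PiLp.hasFDerivAt_toLp (𝕜 := ℝ) 2 _).comp_hasDerivAt s (hu s hs)).hasDerivWithinAt)
      hf ((PiLp.continuous_toLp 2 _).comp_continuousOn hg)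
      (fun s hs ↦ hμμ' ▸ linearizedSystem_of_systemAt (hsys s hs)) ht
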